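/- There exist constants C, c > 0 and h₀ > 0 such that for every h ∈ (0,h₀) there are E₀ = E₀(h) ∈ ℝ with |E₀ − 1| ≤ C h and v = v(·;h) ∈ C^∞([−R,R]) satisfying: (P(h) − E₀)v = 0 on [−R,R]; ‖v‖_{L²(−3.5,3.5)} ≥ C^{−1}; and ‖v‖_{H¹_h({R−1<|x|<R})} ≤ C e^{−c/h}. -/

import Mathlib

open MeasureTheory Set Real

noncomputable section

/-- The `L²` norm of `u` over the set `I`. -/
def l2Norm (I : Set ℝ) (u : ℝ → ℝ) : ℝ :=
  Real.sqrt (∫ x in I, ‖u x‖ ^ 2)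

/-- The semiclassical `H¹_h` norm of `u` (with derivative `u'`) over the set `I`. -/
def h1Norm (h : ℝ) (I : Set ℝ) (u u' : ℝ → ℝ) : ℝ :=
  Real.sqrt ((∫ x in I, ‖u x‖ ^ 2) + ∫ x in I, ‖h * u' x‖ ^ 2)


/-- Global existence for bounded, globally Lipschitz scalar ODEs. -/
lemma qm_global_ode (F : ℝ → ℝ → ℝ) (K L : NNReal) (hL : ∀ t x, |F t x| ≤ L)
    (hK : ∀ t, LipschitzWith K (F t)) (hc : ∀ x, Continuous fun t => F t x) :
    ∃ θ : ℝ → ℝ, θ 0 = 0 ∧ ∀ t, HasDerivAt θ (F t (θ t)) t := by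
  have hloc : ∀ n : ℕ, ∃ θ : ℝ → ℝ, θ 0 = 0 ∧
      ∀ t ∈ Ioo (-(n + 1 : ℝ)) (n + 1), HasDerivAt θ (F t (θ t)) t := by
    intro n
    have hn : (0 : ℝ) ≤ n + 1 := by positivity
    have h0 : (0 : ℝ) ∈ Icc (-(n + 1 : ℝ)) (n + 1) := ⟨by linarith, hn⟩
    have hP : IsPicardLindelof F (⟨0, h0⟩ : Icc (-(n + 1 : ℝ)) (n + 1)) 0
        (L * (n + 1)) 0 L K :=
      { lipschitzOnWith := fun t _ => (hK t).lipschitzOnWith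
        continuousOn := fun x _ => (hc x).continuousOn
        norm_le := fun t _ x _ => hL t x
        mul_max_le := by simp }
    obtain ⟨α, h1, h2⟩ := hP.exists_eq_forall_mem_Icc_hasDerivWithinAt₀
    exact ⟨α, h1, fun t ht => (h2 t (Ioo_subset_Icc_self ht)).hasDerivAt (Icc_mem_nhds ht.1 ht.2)⟩
  choose Θ h0 hΘ using hloc
  have key : ∀ m n : ℕ, m ≤ n → EqOn (Θ m) (Θ n) (Ioo (-(m + 1 : ℝ)) (m + 1)) := by
    intro m n hmn
    have hmn' : (m : ℝ) ≤ n := by exact_mod_cast hmn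
    have hm : (0 : ℝ) ≤ m := by positivity
    refine ODE_solution_unique_of_mem_Ioo (v := F) (s := fun _ => univ) (K := K) (t₀ := 0)
      (fun t _ => (hK t).lipschitzOnWith) ⟨by linarith, by linarith⟩
      (fun t ht => ⟨hΘ m t ht, trivial⟩)
      (fun t ht => ⟨hΘ n t ⟨by linarith [ht.1], by linarith [ht.2]⟩, trivial⟩) (by rw [h0, h0])
  have key2 : ∀ m n : ℕ, ∀ t : ℝ, |t| < m + 1 → |t| < n + 1 → Θ m t = Θ n t := by
    intro m n t hm hn
    rw [abs_lt] at hm hn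
    rcases le_total m n with h | h
    · exact key m n h ⟨by linarith, by linarith⟩
    · exact (key n m h ⟨by linarith, by linarith⟩).symm
  refine ⟨fun t => Θ ⌈|t|⌉₊ t, by simp [h0], fun t => ?_⟩
  have hlt : ∀ t : ℝ, |t| < ⌈|t|⌉₊ + 1 := fun t => by linarith [Nat.le_ceil |t|]
  have ht := hlt t
  refine (hΘ ⌈|t|⌉₊ t (by rw [abs_lt] at ht; exact ⟨by linarith, by linarith⟩)).congr_of_eventuallyEq ?_
  have : ∀ᶠ s : ℝ in nhds t, |s| < ⌈|t|⌉₊ + 1 := continuous_abs.continuousAt.eventually_lt_const ht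
  filter_upwards [this] with s hs
  exact key2 _ _ _ (hlt s) hs

/-- Comparison principle. -/
lemma qm_compare (F : ℝ → ℝ → ℝ) (K : NNReal) (hK : ∀ t, LipschitzWith K (F t))
    (α β α' β' : ℝ → ℝ) (a b : ℝ)
    (hα : ∀ t, HasDerivAt α (α' t) t) (hβ : ∀ t, HasDerivAt β (β' t) t)
    (h1 : ∀ t ∈ Icc a b, α' t ≤ F t (α t)) (h2 : ∀ t ∈ Icc a b, F t (β t) ≤ β' t)
    (hab : α a ≤ β a) : ∀ t ∈ Icc a b, α t ≤ β t := by
  intro t ht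
  have key : ∀ ε > 0, α t - β t ≤ ε * exp ((K + 1) * (t - a)) := by
    intro ε hε
    refine image_le_of_deriv_right_lt_deriv_boundary (f := fun t => α t - β t)
      (f' := fun t => α' t - β' t) (B := fun t => ε * exp ((K + 1) * (t - a)))
      (B' := fun t => ε * (exp ((K + 1) * (t - a)) * ((K + 1) * 1)))
      (fun x _ => ((hα x).sub (hβ x)).continuousAt.continuousWithinAt)
      (fun x _ => ((hα x).sub (hβ x)).hasDerivWithinAt) ?_ ?_ ?_ ht
    · simp; linarith
    · intro x
      exact ((((hasDerivAt_id x).sub_const a).const_mul ((K : ℝ) + 1)).exp).const_mul ε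
    · intro x hx he
      have hx' := Ico_subset_Icc_self hx
      have hpos : 0 < ε * exp ((K + 1) * (x - a)) := by positivity
      have hl := (hK x).dist_le_mul (α x) (β x)
      rw [Real.dist_eq, Real.dist_eq] at hl
      rw [he, abs_of_pos hpos] at hl
      have := le_abs_self (F x (α x) - F x (β x))
      have := h1 x hx'
      have := h2 x hx'
      nlinarith
  have : α t - β t ≤ 0 := by
    refine le_of_forall_pos_le_add fun ε hε => ?_
    have := key (ε / exp ((K + 1) * (t - a))) (by positivity)
    rw [div_mul_cancel₀ _ (exp_pos _).ne'] at this
    linarith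
  linarith

/-- Right-hand side of the Pruefer equation. -/
def qmPF (k : ℝ) (A : ℝ → ℝ) (x θ : ℝ) : ℝ := k * ((A x + 1) * cos θ ^ 2 - 1)

lemma qmPF_lip (k : ℝ) (hk : 0 < k) (A : ℝ → ℝ) (M : ℝ) (hM : ∀ x, |A x| ≤ M) (x : ℝ) :
    LipschitzWith (k * ((M + 1) * 2)).toNNReal (qmPF k A x) := by
  have hM0 : 0 ≤ M := (abs_nonneg _).trans (hM 0)
  refine LipschitzWith.of_dist_le_mul fun a b => ?_
  rw [Real.coe_toNNReal _ (by positivity), Real.dist_eq, Real.dist_eq]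
  have : qmPF k A x a - qmPF k A x b = k * ((A x + 1) * ((cos a + cos b) * (cos a - cos b))) := by
    unfold qmPF; ring
  rw [this, abs_mul, abs_mul, abs_mul, abs_of_pos hk]
  have h1 : |A x + 1| ≤ M + 1 := (abs_add_le _ _).trans (by simpa using hM x)
  have h2 : |cos a + cos b| ≤ 2 :=
    (abs_add_le _ _).trans (by linarith [abs_cos_le_one a, abs_cos_le_one b])
  have h3 : |cos a - cos b| ≤ |a - b| := by
    have := lipschitzWith_cos.dist_le_mul a b
    simpa [Real.dist_eq] using this
  calc k * (|A x + 1| * (|cos a + cos b| * |cos a - cos b|))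
      ≤ k * ((M + 1) * (2 * |a - b|)) := by gcongr
    _ = _ := by ring

lemma qmPF_bdd (k : ℝ) (hk : 0 < k) (A : ℝ → ℝ) (M : ℝ) (hM : ∀ x, |A x| ≤ M) (x θ : ℝ) :
    |qmPF k A x θ| ≤ (k * (M + 2)).toNNReal := by
  have hM0 : 0 ≤ M := (abs_nonneg _).trans (hM 0)
  rw [Real.coe_toNNReal _ (by positivity), qmPF, abs_mul, abs_of_pos hk]
  gcongr
  have h1 := abs_le.1 (hM x)
  have := cos_sq_le_one θ
  have := sq_nonneg (cos θ)
  rw [abs_le]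
  constructor <;> nlinarith

/-- Solution of the Pruefer equation. -/
lemma qm_prufer (k : ℝ) (hk : 0 < k) (A : ℝ → ℝ) (M : ℝ) (hM : ∀ x, |A x| ≤ M)
    (hA : Continuous A) :
    ∃ θ : ℝ → ℝ, θ 0 = 0 ∧ ∀ t, HasDerivAt θ (qmPF k A t (θ t)) t :=
  qm_global_ode _ _ _ (qmPF_bdd k hk A M hM) (qmPF_lip k hk A M hM)
    (fun x => by unfold qmPF; fun_prop)

lemma qm_prufer_odd (k : ℝ) (hk : 0 < k) (A : ℝ → ℝ) (M : ℝ) (hM : ∀ x, |A x| ≤ M)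
    (hev : ∀ x, A (-x) = A x) (θ : ℝ → ℝ) (h0 : θ 0 = 0)
    (hθ : ∀ t, HasDerivAt θ (qmPF k A t (θ t)) t) : ∀ x, θ (-x) = - θ x := by
  have : (fun x => - θ (-x)) = θ := by
    refine ODE_solution_unique_univ (v := qmPF k A) (s := fun _ => univ) (t₀ := 0)
      (fun t => (qmPF_lip k hk A M hM t).lipschitzOnWith) (fun t => ⟨?_, trivial⟩)
      (fun t => ⟨hθ t, trivial⟩) (by simp [h0])
    have := ((hθ (-t)).comp t (hasDerivAt_neg t)).neg
    refine HasDerivAt.congr_deriv this ?_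
    simp [qmPF, hev]
  intro x
  have := congrFun this x
  linarith

/-- From the Pruefer angle to the linear system. -/
lemma qm_linear (k : ℝ) (A : ℝ → ℝ) (hA : Continuous A)
    (hev : ∀ x, A (-x) = A x) (θ : ℝ → ℝ) (h0 : θ 0 = 0) (hodd : ∀ x, θ (-x) = - θ x)
    (hθ : ∀ t, HasDerivAt θ (qmPF k A t (θ t)) t) :
    ∃ u p : ℝ → ℝ, (∀ x, HasDerivAt u (k * p x) x) ∧ (∀ x, HasDerivAt p (k * (A x * u x)) x) ∧
      u 0 = 1 ∧ (∀ x, cos (θ x) = 0 → u x = 0) ∧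
      (∀ x, u (-x) = u x) ∧ ∀ x, p (-x) = - p x := by
  have hθc : Continuous θ := continuous_iff_continuousAt.2 fun t => (hθ t).continuousAt
  set g : ℝ → ℝ := fun x => k * (1 + A x) * (cos (θ x) * sin (θ x)) with hg
  have hgc : Continuous g := by fun_prop
  set ρ : ℝ → ℝ := fun x => ∫ t in (0 : ℝ)..x, g t with hρ
  have hρd : ∀ x, HasDerivAt ρ (g x) x := fun x =>
    intervalIntegral.integral_hasDerivAt_right (hgc.intervalIntegrable _ _)
      (hgc.stronglyMeasurableAtFilter _ _) hgc.continuousAt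
  have hρev : ∀ x, ρ (-x) = ρ x := by
    intro x
    have h1 : ∀ t, g (-t) = - g t := by
      intro t; simp only [hg, hodd, hev, cos_neg, sin_neg]; ring
    have h2 : ∫ t in (0:ℝ)..x, g (-t) = ∫ t in (-x)..(0:ℝ), g t := by
      rw [intervalIntegral.integral_comp_neg]; simp
    simp only [h1, intervalIntegral.integral_neg] at h2
    simp only [hρ]
    rw [intervalIntegral.integral_symm, ← h2]; simp
  refine ⟨fun x => exp (ρ x) * cos (θ x), fun x => exp (ρ x) * sin (θ x), ?_, ?_, ?_, ?_, ?_, ?_⟩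
  · intro x
    refine ((hρd x).exp.mul (hθ x).cos).congr_deriv ?_
    simp only [qmPF, hg]
    ring
  · intro x
    refine ((hρd x).exp.mul (hθ x).sin).congr_deriv ?_
    simp only [qmPF, hg]
    have := sin_sq_add_cos_sq (θ x)
    linear_combination (k * exp (ρ x) * cos (θ x)) * (1 + A x) * this
  · simp [h0, hρ]
  · intro x hx; simp [hx]
  · intro x; simp [hρev, hodd]
  · intro x; simp [hρev, hodd]

/-- Continuity of the Pruefer angle in the energy. -/
lemma qm_prufer_cont (k : ℝ) (hk : 0 < k) (V : ℝ → ℝ) (M : ℝ) (hM : ∀ x, |V x| ≤ M)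
    (h : ℝ) (hh : 0 < h) (Θ : ℝ → ℝ → ℝ) (h0 : ∀ E, Θ E 0 = 0)
    (hΘ : ∀ E t, HasDerivAt (Θ E) (qmPF k (fun x => (V x - E) / h) t (Θ E t)) t)
    (b : ℝ) (hb : 0 ≤ b) : Continuous fun E => Θ E b := by
  rw [continuous_iff_continuousAt]
  intro E₀
  have hM' : ∀ x, |(V x - E₀) / h| ≤ (M + |E₀|) / h := by
    intro x
    rw [abs_div, abs_of_pos hh]
    gcongr
    exact (abs_sub _ _).trans (by linarith [hM x])
  have hbound : ∀ E, dist (Θ E b) (Θ E₀ b) ≤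
      gronwallBound 0 (k * (((M + |E₀|) / h + 1) * 2)).toNNReal (k * (|E - E₀| / h)) b := by
    intro E
    have := dist_le_of_approx_trajectories_ODE (v := qmPF k (fun x => (V x - E₀) / h))
      (a := 0) (b := b) (δ := 0) (εf := k * (|E - E₀| / h)) (εg := 0)
      (qmPF_lip k hk _ _ hM') (fun x _ => (hΘ E x).continuousAt.continuousWithinAt)
      (fun x _ => (hΘ E x).hasDerivWithinAt) ?_
      (fun x _ => (hΘ E₀ x).continuousAt.continuousWithinAt)
      (fun x _ => (hΘ E₀ x).hasDerivWithinAt) (by simp) (by simp [h0]) b ⟨hb, le_rfl⟩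
    · simpa using this
    · intro t _
      rw [Real.dist_eq]
      have : qmPF k (fun x => (V x - E) / h) t (Θ E t) - qmPF k (fun x => (V x - E₀) / h) t (Θ E t)
          = k * (((E₀ - E) / h) * cos (Θ E t) ^ 2) := by
        unfold qmPF; field_simp; ring
      rw [this, abs_mul, abs_mul, abs_of_pos hk, abs_div, abs_of_pos hh, abs_sub_comm E₀ E]
      have h1 : |cos (Θ E t) ^ 2| ≤ 1 := by
        rw [abs_of_nonneg (sq_nonneg _)]; exact cos_sq_le_one _
      have h2 : 0 ≤ |E - E₀| / h := by positivity
      gcongr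
      nlinarith
  have hlim : Filter.Tendsto (fun E => gronwallBound 0
      (k * (((M + |E₀|) / h + 1) * 2)).toNNReal (k * (|E - E₀| / h)) b) (nhds E₀) (nhds 0) := by
    have hc : Continuous fun E => gronwallBound 0
      (k * (((M + |E₀|) / h + 1) * 2)).toNNReal (k * (|E - E₀| / h)) b :=
      (gronwallBound_continuous_ε 0 _ b).comp (by fun_prop)
    have := hc.tendsto E₀
    simpa [gronwallBound_ε0_δ0] using this
  exact tendsto_iff_dist_tendsto_zero.2
    (squeeze_zero (fun _ => dist_nonneg) hbound hlim)

/-- Existence of an energy with a Dirichlet condition at `b`. -/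
lemma qm_eigen (V : ℝ → ℝ) (hVc : Continuous V) (M : ℝ) (hM : ∀ x, |V x| ≤ M)
    (hev : ∀ x, V (-x) = V x) (hin : ∀ x ∈ Icc (-1 : ℝ) 1, V x = x ^ 2 + 1)
    (h : ℝ) (hh : 0 < h) (hh1 : h ≤ 1 / 25) (b : ℝ) (hb : 1 ≤ b) :
    ∃ E, 1 ≤ E ∧ E ≤ 1 + 26 * h ∧ ∃ u p : ℝ → ℝ, (∀ x, HasDerivAt u (p x / h) x) ∧
      (∀ x, HasDerivAt p ((V x - E) * u x / h) x) ∧ u 0 = 1 ∧ u b = 0 ∧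
      (∀ x, u (-x) = u x) ∧ ∀ x, p (-x) = - p x := by
  set s := √h with hs
  have hs0 : 0 < s := Real.sqrt_pos.2 hh
  have hss : s * s = h := Real.mul_self_sqrt hh.le
  set k := 1 / s with hk
  have hk0 : 0 < k := by positivity
  have hMA : ∀ E x, |(V x - E) / h| ≤ (M + |E|) / h := by
    intro E x
    rw [abs_div, abs_of_pos hh]
    gcongr
    exact (abs_sub _ _).trans (by linarith [hM x])
  have hAc : ∀ E, Continuous fun x => (V x - E) / h := fun E => by fun_prop
  have hAev : ∀ E x, (V (-x) - E) / h = (V x - E) / h := fun E x => by rw [hev]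
  choose Θ h0 hΘ using fun E => qm_prufer k hk0 _ _ (hMA E) (hAc E)
  have hcont := qm_prufer_cont k hk0 V M hM h hh Θ h0 hΘ b (by linarith)
  have h5s : 5 * s ≤ 1 := by nlinarith
  -- the angle for the low energy is nonnegative on `[0, 5 s]`
  have hlow : 0 ≤ Θ 1 (5 * s) := by
    refine qm_compare (qmPF k fun x => (V x - 1) / h) _ (qmPF_lip k hk0 _ _ (hMA 1))
      (fun _ => 0) (Θ 1) (fun _ => 0) (fun t => qmPF k (fun x => (V x - 1) / h) t (Θ 1 t)) 0 (5 * s)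
      (fun t => hasDerivAt_const t 0) (hΘ 1) ?_ (fun _ _ => le_rfl) (by rw [h0]) (5 * s)
      ⟨by positivity, le_rfl⟩
    intro t ht
    simp only [qmPF, cos_zero]
    rw [hin t ⟨by linarith [ht.1], by linarith [ht.2]⟩]
    have : 0 ≤ (t ^ 2 + 1 - 1) / h := by
      apply div_nonneg _ hh.le; nlinarith
    nlinarith
  -- the angle for the high energy has turned by at least 5
  have hhigh : Θ (1 + 26 * h) (5 * s) ≤ -5 := by
    have : AntitoneOn (fun t => Θ (1 + 26 * h) t + k * t) (Icc 0 (5 * s)) := by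
      have hd : ∀ t, HasDerivAt (fun t => Θ (1 + 26 * h) t + k * t) (_ + k * 1) t :=
        fun t => (hΘ (1 + 26 * h) t).add ((hasDerivAt_id t).const_mul k)
      refine antitoneOn_of_deriv_nonpos (convex_Icc _ _)
        (fun x _ => (hd x).continuousAt.continuousWithinAt)
        (fun x _ => (hd x).differentiableAt.differentiableWithinAt) ?_
      intro t ht
      rw [interior_Icc] at ht
      rw [(hd t).deriv]
      simp only [qmPF]
      rw [hin t ⟨by linarith [ht.1], by linarith [ht.2]⟩]
      have h1 : (t ^ 2 + 1 - (1 + 26 * h)) / h ≤ -1 := by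
        rw [div_le_iff₀ hh]
        nlinarith [ht.1, ht.2]
      have h2 := sq_nonneg (cos (Θ (1 + 26 * h) t))
      have h3 : ((t ^ 2 + 1 - (1 + 26 * h)) / h + 1) * cos (Θ (1 + 26 * h) t) ^ 2 ≤ 0 :=
        mul_nonpos_of_nonpos_of_nonneg (by linarith) h2
      nlinarith
    have h1 := this (left_mem_Icc.2 (by positivity)) (right_mem_Icc.2 (by positivity))
      (by positivity : 0 ≤ 5 * s)
    simp only [h0] at h1
    have : k * (5 * s) = 5 := by rw [hk]; field_simp
    linarith
  have hcmp : Θ (1 + 26 * h) b + π ≤ Θ 1 b := by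
    refine qm_compare (qmPF k fun x => (V x - 1) / h) _ (qmPF_lip k hk0 _ _ (hMA 1))
      (fun t => Θ (1 + 26 * h) t + π) (Θ 1)
      (fun t => qmPF k (fun x => (V x - (1 + 26 * h)) / h) t (Θ (1 + 26 * h) t))
      (fun t => qmPF k (fun x => (V x - 1) / h) t (Θ 1 t)) (5 * s) b
      (fun t => (hΘ _ t).add_const π) (hΘ 1) ?_ (fun _ _ => le_rfl) ?_ b
      ⟨by linarith, le_rfl⟩
    · intro t _
      simp only [qmPF, cos_add_pi, neg_sq]
      gcongr
      linarith
    · have := pi_lt_d2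
      linarith
  obtain ⟨y, hy1, hy2, hy3⟩ : ∃ y, Θ (1 + 26 * h) b ≤ y ∧ y ≤ Θ 1 b ∧ cos y = 0 := by
    set n := ⌈(Θ (1 + 26 * h) b - π / 2) / π⌉ with hn
    have hp := pi_pos
    have h1 := Int.le_ceil ((Θ (1 + 26 * h) b - π / 2) / π)
    have h2 := (Int.ceil_lt_add_one ((Θ (1 + 26 * h) b - π / 2) / π)).le
    rw [← hn] at h1 h2
    rw [div_le_iff₀ hp] at h1
    have h3 : (n : ℝ) * π ≤ Θ (1 + 26 * h) b - π / 2 + π := by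
      have := mul_le_mul_of_nonneg_right h2 hp.le
      rw [add_mul, div_mul_cancel₀ _ hp.ne'] at this
      linarith
    refine ⟨(2 * n + 1) * π / 2, by linarith, by linarith, ?_⟩
    exact Real.cos_eq_zero_iff.2 ⟨n, rfl⟩
  obtain ⟨E, hE, hEy⟩ := intermediate_value_Icc' (by linarith : (1 : ℝ) ≤ 1 + 26 * h)
    hcont.continuousOn ⟨hy1, hy2⟩
  simp only at hEy
  obtain ⟨u, p, hu, hp, hu0, hub, hue, hpo⟩ := qm_linear k _ (hAc E) (hAev E) (Θ E) (h0 E)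
    (qm_prufer_odd k hk0 _ _ (hMA E) (hAev E) (Θ E) (h0 E) (hΘ E)) (hΘ E)
  refine ⟨E, hE.1, hE.2, u, fun x => s * p x, ?_, ?_, hu0, hub b (by rw [hEy, hy3]), hue, ?_⟩
  · intro x
    refine (hu x).congr_deriv ?_
    rw [hk, ← hss]; field_simp
  · intro x
    refine ((hp x).const_mul s).congr_deriv ?_
    rw [hk]; field_simp
  · intro x; simp [hpo]

lemma qm_anti (f f' : ℝ → ℝ) (a b : ℝ) (hf : ∀ x, HasDerivAt f (f' x) x)
    (h : ∀ x ∈ Icc a b, f' x ≤ 0) : AntitoneOn f (Icc a b) := by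
  refine antitoneOn_of_deriv_nonpos (convex_Icc _ _)
    (fun x _ => (hf x).continuousAt.continuousWithinAt)
    (fun x _ => (hf x).differentiableAt.differentiableWithinAt) ?_
  intro x hx
  rw [(hf x).deriv]
  exact h x (interior_subset hx)

lemma qm_gron (g g' : ℝ → ℝ) (a b K : ℝ) (hg : ∀ x, HasDerivAt g (g' x) x)
    (h : ∀ x ∈ Icc a b, g' x ≤ K * g x) : ∀ x ∈ Icc a b, g x ≤ g a * exp (K * (x - a)) := by
  intro x hx
  have hab : a ≤ b := hx.1.trans hx.2
  have hd : ∀ x, HasDerivAt (fun x => g x * exp (-K * (x - a)))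
      (g' x * exp (-K * (x - a)) + g x * (exp (-K * (x - a)) * (-K * 1))) x := fun x =>
    (hg x).mul ((((hasDerivAt_id x).sub_const a).const_mul (-K)).exp)
  have := qm_anti _ _ a b hd ?_ (left_mem_Icc.2 hab) hx hx.1
  · simp only [sub_self, mul_zero, exp_zero, mul_one] at this
    have h2 : exp (-K * (x - a)) * exp (K * (x - a)) = 1 := by
      rw [← exp_add]; simp
    calc g x = g x * exp (-K * (x - a)) * exp (K * (x - a)) := by rw [mul_assoc, h2, mul_one]
      _ ≤ _ := by gcongr
  · intro y hy
    have := h y hy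
    have := exp_pos (-K * (y - a))
    nlinarith

/-- Decay through the barrier. -/
lemma qm_barrier (V : ℝ → ℝ) (hsl : ∀ x ∈ Icc (2 : ℝ) 3.5, V x = 4 - x) (h E : ℝ) (hh : 0 < h)
    (hh1 : h ≤ 1 / 10000) (hE : E ≤ 1 + 26 * h) (u p : ℝ → ℝ)
    (hu : ∀ x, HasDerivAt u (p x / h) x) (hp : ∀ x, HasDerivAt p ((V x - E) * u x / h) x)
    (hub : u (74 / 25) = 0) :
    ∀ x ∈ Icc (2 : ℝ) (21 / 10), 1 / 10 * p (74 / 25) ^ 2 * exp (1 / 5 / h) ≤ u x ^ 2 := by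
  have hVE : ∀ x ∈ Icc (2 : ℝ) (74 / 25), 0 ≤ V x - E := by
    intro x hx
    rw [hsl x ⟨hx.1, by norm_num; linarith [hx.2]⟩]; linarith [hx.2]
  have hVE2 : ∀ x ∈ Icc (2 : ℝ) (12 / 5), 1 / 4 ≤ V x - E := by
    intro x hx
    rw [hsl x ⟨hx.1, by norm_num; linarith [hx.2]⟩]; linarith [hx.2]
  have hyd : ∀ x, HasDerivAt (fun x => -(u x * p x)) (-(p x ^ 2 + (V x - E) * u x ^ 2) / h) x := by
    intro x
    refine ((hu x).mul (hp x)).neg.congr_deriv ?_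
    ring
  have hpd : ∀ x, HasDerivAt (fun x => p x ^ 2) (2 * p x * ((V x - E) * u x) / h) x := by
    intro x
    refine ((hp x).pow 2).congr_deriv ?_
    simp; ring
  have hud : ∀ x, HasDerivAt (fun x => u x ^ 2) (2 * (u x * p x) / h) x := by
    intro x
    refine ((hu x).pow 2).congr_deriv ?_
    simp; ring
  have hy_anti := qm_anti _ _ 2 (74 / 25) hyd (by
    intro x hx
    apply div_nonpos_of_nonpos_of_nonneg _ hh.le
    have := mul_nonneg (hVE x hx) (sq_nonneg (u x))
    nlinarith [sq_nonneg (p x)])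
  have hy0 : ∀ x ∈ Icc (2 : ℝ) (74 / 25), 0 ≤ -(u x * p x) := by
    intro x hx
    have := hy_anti hx (right_mem_Icc.2 (by norm_num)) hx.2
    simpa [hub] using this
  have hp_anti := qm_anti _ _ 2 (74 / 25) hpd (by
    intro x hx
    apply div_nonpos_of_nonpos_of_nonneg _ hh.le
    have := mul_nonneg (hVE x hx) (hy0 x hx)
    nlinarith)
  set P := p (74 / 25) ^ 2 with hP
  have hP0 : 0 ≤ P := sq_nonneg _
  have hpP : ∀ x ∈ Icc (2 : ℝ) (74 / 25), P ≤ p x ^ 2 := fun x hx =>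
    hp_anti hx (right_mem_Icc.2 (by norm_num)) hx.2
  -- lower bound at 12/5
  have hy24 : P / 2 ≤ -(u (12 / 5) * p (12 / 5)) := by
    have hd : ∀ x, HasDerivAt (fun x => -(u x * p x) + P / h * x)
        (-(p x ^ 2 + (V x - E) * u x ^ 2) / h + P / h * 1) x := fun x =>
      (hyd x).add ((hasDerivAt_id x).const_mul (P / h))
    have := qm_anti _ _ 2 (74 / 25) hd (by
      intro x hx
      have e : -(p x ^ 2 + (V x - E) * u x ^ 2) / h + P / h * 1
        = -(p x ^ 2 + (V x - E) * u x ^ 2 - P) / h := by ring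
      rw [e]
      apply div_nonpos_of_nonpos_of_nonneg _ hh.le
      have := mul_nonneg (hVE x hx) (sq_nonneg (u x))
      linarith [hpP x hx])
      (show (12 / 5 : ℝ) ∈ Icc (2 : ℝ) (74 / 25) by constructor <;> norm_num)
      (right_mem_Icc.2 (by norm_num)) (by norm_num)
    simp only [hub, zero_mul, neg_zero, zero_add] at this
    have h1 : P ≤ P / h := by
      rw [le_div_iff₀ hh]; nlinarith
    linarith
  have hy22 : P / 2 * exp (1 / 5 / h) ≤ -(u (11 / 5) * p (11 / 5)) := by
    have := qm_gron _ _ (11 / 5) (12 / 5) (-(1 / h)) hyd (by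
      intro x hx
      have hx' : x ∈ Icc (2 : ℝ) (12 / 5) := ⟨by linarith [hx.1], hx.2⟩
      have e : -(1 / h) * -(u x * p x) = (u x * p x) / h := by ring
      rw [e]
      gcongr
      have := hVE2 x hx'
      have := mul_le_mul_of_nonneg_right this (sq_nonneg (u x))
      nlinarith [sq_nonneg (p x + u x / 2)]) (12 / 5) ⟨by norm_num, le_rfl⟩
    have e : (-(1 / h) * (12 / 5 - 11 / 5)) = -(1 / 5 / h) := by ring
    rw [e, exp_neg] at this
    have h1 := hy24.trans this
    rwa [← div_eq_mul_inv, le_div_iff₀ (exp_pos _)] at h1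
  set Y := -(u (11 / 5) * p (11 / 5)) with hY
  intro x hx
  have hY0 : 0 ≤ Y := hy0 _ (by constructor <;> norm_num)
  have hd : ∀ x, HasDerivAt (fun x => u x ^ 2 + 2 * Y / h * x)
      (2 * (u x * p x) / h + 2 * Y / h * 1) x := fun x =>
    (hud x).add ((hasDerivAt_id x).const_mul (2 * Y / h))
  have := qm_anti _ _ 2 (11 / 5) hd (by
    intro x hx
    have e : 2 * (u x * p x) / h + 2 * Y / h * 1 = 2 * (Y - -(u x * p x)) / h := by ring
    rw [e]
    apply div_nonpos_of_nonpos_of_nonneg _ hh.le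
    have := hy_anti (⟨hx.1, by linarith [hx.2]⟩ : x ∈ Icc (2 : ℝ) (74 / 25))
      (show (11 / 5 : ℝ) ∈ Icc (2 : ℝ) (74 / 25) by constructor <;> norm_num) hx.2
    simp only at this
    linarith) (⟨hx.1, by linarith [hx.2]⟩ : x ∈ Icc (2 : ℝ) (11 / 5))
    (right_mem_Icc.2 (by norm_num)) (by linarith [hx.2])
  simp only at this
  have h1 : Y ≤ Y / h := by
    rw [le_div_iff₀ hh]; nlinarith
  have h2 := sq_nonneg (u (11 / 5))
  have h3 : 2 * Y / h = 2 * (Y / h) := by ring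
  rw [h3] at this
  have h4 : 0 ≤ Y / h := by positivity
  nlinarith [hx.2]

/-- Bounded growth past the barrier. -/
lemma qm_outer (V : ℝ → ℝ) (hsl : ∀ x ∈ Icc (2 : ℝ) 3.5, V x = 4 - x) (h E : ℝ) (hh : 0 < h)
    (hh1 : h ≤ 1 / 10000) (hE1 : 1 ≤ E) (hE : E ≤ 1 + 26 * h) (u p : ℝ → ℝ)
    (hu : ∀ x, HasDerivAt u (p x / h) x) (hp : ∀ x, HasDerivAt p ((V x - E) * u x / h) x)
    (hub : u (74 / 25) = 0) (V' : ℝ → ℝ) (hV : ∀ x, HasDerivAt V (V' x) x) (D μ R : ℝ)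
    (hD : ∀ x, |V' x| ≤ D) (hμ : 0 < μ) (hR : 5 < R)
    (hVμ : ∀ x ∈ Icc (76 / 25 : ℝ) R, V x ≤ 1 - μ) :
    ∀ x ∈ Icc (76 / 25 : ℝ) R, u x ^ 2 + p x ^ 2 ≤
      (1 + 1 / μ) * (2 * (p (74 / 25) ^ 2 * exp (1 / 25 / h)) * exp (D / μ * R)) := by
  have hD0 : 0 ≤ D := (abs_nonneg _).trans (hD 0)
  have hpd : ∀ x, HasDerivAt (fun x => p x ^ 2) (2 * p x * ((V x - E) * u x) / h) x := by
    intro x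
    refine ((hp x).pow 2).congr_deriv ?_
    simp; ring
  have hud : ∀ x, HasDerivAt (fun x => u x ^ 2) (2 * (u x * p x) / h) x := by
    intro x
    refine ((hu x).pow 2).congr_deriv ?_
    simp; ring
  have hQ : p (76 / 25) ^ 2 + 1 / 25 * u (76 / 25) ^ 2 ≤ p (74 / 25) ^ 2 * exp (1 / 25 / h) := by
    have := qm_gron (fun x => p x ^ 2 + 1 / 25 * u x ^ 2) _ (74 / 25) (76 / 25) (1 / 2 / h)
      (fun x => (hpd x).add ((hud x).const_mul (1 / 25))) (by
        intro x hx
        have hv := hsl x ⟨by linarith [hx.1], by norm_num; linarith [hx.2]⟩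
        have e : 2 * p x * ((V x - E) * u x) / h + 1 / 25 * (2 * (u x * p x) / h)
          = (2 * (V x - E + 1 / 25) * (u x * p x)) / h := by ring
        have e2 : 1 / 2 / h * (p x ^ 2 + 1 / 25 * u x ^ 2)
          = (1 / 2 * (p x ^ 2 + 1 / 25 * u x ^ 2)) / h := by ring
        rw [e, e2]
        apply div_le_div_of_nonneg_right _ hh.le
        have h1 : |V x - E + 1 / 25| ≤ 9 / 100 := by
          rw [hv, abs_le]; constructor <;> linarith [hx.1, hx.2]
        have h2 : |u x * p x| ≤ 5 / 2 * (p x ^ 2 + 1 / 25 * u x ^ 2) := by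
          rw [abs_le]; constructor <;> nlinarith [sq_nonneg (p x - u x / 5), sq_nonneg (p x + u x / 5)]
        have h3 : (V x - E + 1 / 25) * (u x * p x) ≤ 9 / 100 * (5 / 2 * (p x ^ 2 + 1 / 25 * u x ^ 2)) := by
          refine (le_abs_self _).trans ?_
          rw [abs_mul]
          gcongr
        nlinarith [sq_nonneg (p x), sq_nonneg (u x)]) (76 / 25) ⟨by norm_num, le_rfl⟩
    simp only [hub] at this
    have e : 1 / 2 / h * (76 / 25 - 74 / 25 : ℝ) = 1 / 25 / h := by ring
    rw [e] at this
    simpa using this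
  intro x hx
  have hG := qm_gron (fun x => p x ^ 2 + (E - V x) * u x ^ 2) _ (76 / 25) R (D / μ)
    (fun x => (hpd x).add (((hV x).const_sub E).mul (hud x))) (by
      intro x hx
      have e : 2 * p x * ((V x - E) * u x) / h + (-V' x * u x ^ 2 + (E - V x) * (2 * (u x * p x) / h))
        = -V' x * u x ^ 2 := by ring
      rw [e]
      have h1 := neg_le_of_abs_le (hD x)
      have h2 := hVμ x hx
      have h3 : D * u x ^ 2 ≤ D / μ * ((E - V x) * u x ^ 2) := by
        have : D * u x ^ 2 = D / μ * (μ * u x ^ 2) := by field_simp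
        rw [this]
        gcongr
        linarith
      have h4 : 0 ≤ D / μ * p x ^ 2 := by positivity
      have h5 : -V' x * u x ^ 2 ≤ D * u x ^ 2 := by gcongr; linarith
      nlinarith) x hx
  have hv := hsl (76 / 25) ⟨by norm_num, by norm_num⟩
  have hG0 : p (76 / 25) ^ 2 + (E - V (76 / 25)) * u (76 / 25) ^ 2
      ≤ 2 * (p (74 / 25) ^ 2 * exp (1 / 25 / h)) := by
    rw [hv]
    have : (E - (4 - 76 / 25)) * u (76 / 25) ^ 2 ≤ 2 / 25 * u (76 / 25) ^ 2 := by
      gcongr; linarith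
    nlinarith [sq_nonneg (p (76 / 25))]
  have hG1 : p x ^ 2 + (E - V x) * u x ^ 2 ≤
      2 * (p (74 / 25) ^ 2 * exp (1 / 25 / h)) * exp (D / μ * R) := by
    refine hG.trans ?_
    gcongr
    linarith [hx.2]
  refine le_trans ?_ (mul_le_mul_of_nonneg_left hG1 (by positivity))
  have h2 := hVμ x hx
  have h3 : μ * u x ^ 2 ≤ (E - V x) * u x ^ 2 := by gcongr; linarith
  have h4 : (1 + 1 / μ) * (p x ^ 2 + μ * u x ^ 2) = p x ^ 2 + u x ^ 2 + μ * u x ^ 2 + 1 / μ * p x ^ 2 := by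
    field_simp; ring
  have h5 : (1 + 1 / μ) * (p x ^ 2 + μ * u x ^ 2) ≤ (1 + 1 / μ) * (p x ^ 2 + (E - V x) * u x ^ 2) := by
    gcongr
  have h6 : 0 ≤ μ * u x ^ 2 := by positivity
  have h7 : 0 ≤ 1 / μ * p x ^ 2 := by positivity
  linarith

lemma qm_smooth (V : ℝ → ℝ) (hV : ContDiff ℝ (⊤ : ℕ∞) V) (h E : ℝ) (u p : ℝ → ℝ)
    (hu : ∀ x, HasDerivAt u (p x / h) x) (hp : ∀ x, HasDerivAt p ((V x - E) * u x / h) x) :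
    ContDiff ℝ (⊤ : ℕ∞) u := by
  have hdu : deriv u = fun x => p x / h := funext fun x => (hu x).deriv
  have hdp : deriv p = fun x => (V x - E) * u x / h := funext fun x => (hp x).deriv
  have key : ∀ n : ℕ, ContDiff ℝ n u ∧ ContDiff ℝ n p := by
    intro n
    induction n with
    | zero =>
      refine ⟨contDiff_zero.2 ?_, contDiff_zero.2 ?_⟩
      · exact continuous_iff_continuousAt.2 fun x => (hu x).continuousAt
      · exact continuous_iff_continuousAt.2 fun x => (hp x).continuousAt
    | succ n ih =>
      have hVn : ContDiff ℝ n V := hV.of_le (by exact_mod_cast le_top)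
      obtain ⟨iu, ip⟩ := ih
      constructor
      · push_cast
        refine contDiff_succ_iff_deriv.2 ⟨fun x => (hu x).differentiableAt, by simp, ?_⟩
        rw [hdu]; exact ip.div_const h
      · push_cast
        refine contDiff_succ_iff_deriv.2 ⟨fun x => (hp x).differentiableAt, by simp, ?_⟩
        rw [hdp]; exact ((hVn.sub contDiff_const).mul iu).div_const h
  exact contDiff_infty.2 fun n => (key n).1

/-- Existence of a quasimode `v` solving `(P(h) - E₀) v = 0` on `[-R, R]`
with `E₀ = 1 + O(h)`, mass bounded below on `(-3.5, 3.5)` and exponentially small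
`H¹_h` norm on `{R - 1 < |x| < R}`. -/
theorem quasimode_exponential_decay_near_boundary
    (V : ℝ → ℝ)
    (hV_smooth : ContDiff ℝ (⊤ : ℕ∞) V) (hV_comp : HasCompactSupport V)
    (hV_nonneg : ∀ x, 0 ≤ V x) (hV_even : ∀ x, V (-x) = V x)
    (hV_inner : ∀ x ∈ Set.Icc (-1 : ℝ) 1, V x = x ^ 2 + 1)
    (hV_slope : ∀ x ∈ Set.Icc (2 : ℝ) 3.5, V x = 4 - x)
    (hV_lt : ∀ x : ℝ, 3 < x → V x < 1)
    (hV_supp : tsupport V ⊆ Set.Icc (-5 : ℝ) 5)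
    (R : ℝ) (hR : 5 < R) :
    ∃ C > (0 : ℝ), ∃ c > (0 : ℝ), ∃ h₀ > (0 : ℝ), ∀ h : ℝ, 0 < h → h < h₀ →
      ∃ E₀ : ℝ, ∃ v : ℝ → ℝ,
        |E₀ - 1| ≤ C * h ∧
        ContDiff ℝ (⊤ : ℕ∞) v ∧
        (∀ x ∈ Set.Icc (-R) R, -h ^ 2 * deriv (deriv v) x + (V x - E₀) * v x = 0) ∧
        C⁻¹ ≤ l2Norm (Set.Ioo (-3.5 : ℝ) 3.5) v ∧
        h1Norm h {x : ℝ | R - 1 < |x| ∧ |x| < R} v (deriv v) ≤ C * Real.exp (-c / h) := by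
  obtain ⟨M, hM⟩ := hV_comp.exists_bound_of_continuous hV_smooth.continuous
  have hVd : ∀ x, HasDerivAt V (deriv V x) x := fun x =>
    (hV_smooth.differentiable (by simp) x).hasDerivAt
  have hdc : Continuous (deriv V) := hV_smooth.continuous_deriv (by simp)
  obtain ⟨D, hD⟩ := hV_comp.deriv.exists_bound_of_continuous hdc
  obtain ⟨x₀, hx₀, hmax⟩ := (isCompact_Icc (a := (76 / 25 : ℝ)) (b := R)).exists_isMaxOn
    ⟨R, by linarith, le_rfl⟩ hV_smooth.continuous.continuousOn
  set μ := 1 - V x₀ with hμdef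
  have hμ : 0 < μ := by
    have := hV_lt x₀ (by linarith [hx₀.1])
    linarith
  have hVμ : ∀ x ∈ Icc (76 / 25 : ℝ) R, V x ≤ 1 - μ := by
    intro x hx
    have := hmax hx
    simp only [mem_setOf_eq] at this
    linarith
  set K₀ := (1 + 1 / μ) * (2 * exp (D / μ * R)) with hK₀
  have hK₀pos : 0 < K₀ := by positivity
  set C₃ := √(4 * R * (100 * K₀)) with hC₃
  have hC₃0 : 0 ≤ C₃ := Real.sqrt_nonneg _
  refine ⟨26 + C₃, by positivity, 2 / 25, by norm_num, 1 / 10000, by norm_num, ?_⟩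
  intro h hh hh1
  obtain ⟨E, hE1, hE2, u, p, hu, hp, hu0, hub, hue, hpo⟩ :=
    qm_eigen V hV_smooth.continuous M hM hV_even hV_inner h hh (by linarith) (74 / 25) (by norm_num)
  have huc : Continuous u := continuous_iff_continuousAt.2 fun x => (hu x).continuousAt
  set N2 := ∫ x in Ioo (-3.5 : ℝ) 3.5, u x ^ 2 with hN2
  have hInt : IntegrableOn (fun x => u x ^ 2) (Ioo (-3.5 : ℝ) 3.5) :=
    ((huc.pow 2).integrableOn_Icc (a := (-3.5 : ℝ)) (b := 3.5)).mono_set Ioo_subset_Icc_self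
  have hN2pos : 0 < N2 := by
    have : 0 < ∫ x in (-3.5 : ℝ)..3.5, u x ^ 2 :=
      intervalIntegral.integral_pos (by norm_num) (huc.pow 2).continuousOn
        (fun x _ => sq_nonneg _) ⟨0, by constructor <;> norm_num, by simp [hu0]⟩
    rwa [intervalIntegral.integral_of_le (by norm_num), integral_Ioc_eq_integral_Ioo] at this
  have hlow : 1 / 100 * p (74 / 25) ^ 2 * exp (1 / 5 / h) ≤ N2 := by
    have hb := qm_barrier V hV_slope h E hh hh1.le hE2 u p hu hp hub
    have hsub : Ioo (2 : ℝ) (21 / 10) ⊆ Ioo (-3.5 : ℝ) 3.5 := by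
      intro x hx
      constructor
      · norm_num; linarith [hx.1]
      · norm_num; linarith [hx.2]
    have h1 : ∫ x in Ioo (2 : ℝ) (21 / 10), u x ^ 2 ≤ N2 :=
      setIntegral_mono_set hInt (Filter.Eventually.of_forall fun x => sq_nonneg (u x))
        hsub.eventuallyLE
    have h2 : ∫ x in Ioo (2 : ℝ) (21 / 10), (1 / 10 * p (74 / 25) ^ 2 * exp (1 / 5 / h))
        ≤ ∫ x in Ioo (2 : ℝ) (21 / 10), u x ^ 2 :=
      setIntegral_mono_on (integrableOn_const (by simp)) (hInt.mono_set hsub) measurableSet_Ioo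
        (fun x hx => hb x (Ioo_subset_Icc_self hx))
    rw [setIntegral_const] at h2
    have h3 : volume.real (Ioo (2 : ℝ) (21 / 10)) = 1 / 10 := by
      rw [Real.volume_real_Ioo_of_le (by norm_num)]; norm_num
    rw [h3, smul_eq_mul] at h2
    linarith
  set N := √N2 with hN
  have hN0 : 0 < N := Real.sqrt_pos.2 hN2pos
  have hNN : N ^ 2 = N2 := Real.sq_sqrt hN2pos.le
  have hvd : deriv (fun x => u x / N) = fun x => p x / h / N :=
    funext fun x => ((hu x).div_const N).deriv
  have hvdd : deriv (fun x => p x / h / N) = fun x => (V x - E) * u x / h / h / N :=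
    funext fun x => (((hp x).div_const h).div_const N).deriv
  refine ⟨E, fun x => u x / N, ?_, ?_, ?_, ?_, ?_⟩
  · rw [abs_of_nonneg (by linarith)]
    nlinarith
  · exact (qm_smooth V hV_smooth h E u p hu hp).div_const N
  · intro x _
    rw [hvd, hvdd]
    field_simp
    ring
  · have : l2Norm (Ioo (-3.5 : ℝ) 3.5) (fun x => u x / N) = 1 := by
      unfold l2Norm
      have e : (fun x => ‖u x / N‖ ^ 2) = fun x => u x ^ 2 / N2 := by
        funext x
        rw [Real.norm_eq_abs, sq_abs, div_pow, hNN]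
      rw [e, integral_div, ← hN2, div_self hN2pos.ne', Real.sqrt_one]
    rw [this]
    exact inv_le_one_of_one_le₀ (by linarith)
  · have hout := qm_outer V hV_slope h E hh hh1.le hE1 hE2 u p hu hp hub (deriv V) hVd D μ R
      hD hμ hR hVμ
    set S := {x : ℝ | R - 1 < |x| ∧ |x| < R} with hS
    set B := 100 * K₀ * exp (-(4 / 25) / h) with hB
    have hBpos : 0 < B := by positivity
    have hPB : K₀ * (p (74 / 25) ^ 2 * exp (1 / 25 / h)) ≤ B * N2 := by
      have e : exp (1 / 25 / h) = exp (-(4 / 25) / h) * exp (1 / 5 / h) := by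
        rw [← exp_add]; congr 1; ring
      have := mul_le_mul_of_nonneg_left hlow hBpos.le
      refine le_trans (le_of_eq ?_) this
      rw [e, hB]; ring
    have hpos : ∀ x ∈ Icc (76 / 25 : ℝ) R, u x ^ 2 + p x ^ 2 ≤ B * N2 := by
      intro x hx
      refine (hout x hx).trans (le_trans (le_of_eq ?_) hPB)
      rw [hK₀]; ring
    have hall : ∀ x ∈ S, u x ^ 2 + p x ^ 2 ≤ B * N2 := by
      intro x hx
      have h1 := hpos |x| ⟨by linarith [hx.1], hx.2.le⟩
      rcases abs_cases x with ⟨h2, _⟩ | ⟨h2, _⟩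
      · rwa [h2] at h1
      · rw [h2, hue, hpo, neg_sq] at h1
        exact h1
    have hSsub : S ⊆ Ioo (-R) R := fun x hx => abs_lt.1 hx.2
    have hSfin : volume S < ⊤ := (measure_mono hSsub).trans_lt (by simp)
    have hSvol : volume.real S ≤ 2 * R := by
      refine (measureReal_mono hSsub (by simp)).trans ?_
      rw [Real.volume_real_Ioo_of_le (by linarith)]
      linarith
    have hI : ∀ f : ℝ → ℝ, (∀ x ∈ S, f x ^ 2 ≤ B) → ∫ x in S, ‖f x‖ ^ 2 ≤ B * (2 * R) := by
      intro f hf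
      have := norm_setIntegral_le_of_norm_le_const (f := fun x => ‖f x‖ ^ 2) (C := B) hSfin (by
        intro x hx
        rw [Real.norm_of_nonneg (by positivity), Real.norm_eq_abs, sq_abs]
        exact hf x hx)
      refine (le_abs_self _).trans (this.trans ?_)
      gcongr
    have hI1 := hI (fun x => u x / N) (by
      intro x hx
      rw [div_pow, hNN, div_le_iff₀ hN2pos]
      linarith [hall x hx, sq_nonneg (p x)])
    have hI2 := hI (fun x => h * deriv (fun x => u x / N) x) (by
      intro x hx
      have e : h * deriv (fun x => u x / N) x = p x / N := by
        rw [hvd]; field_simp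
      rw [e, div_pow, hNN, div_le_iff₀ hN2pos]
      linarith [hall x hx, sq_nonneg (u x)])
    have hfin : h1Norm h S (fun x => u x / N) (deriv fun x => u x / N) ≤ C₃ * exp (-(2 / 25) / h) := by
      unfold h1Norm
      rw [Real.sqrt_le_left (by positivity), mul_pow, hC₃, Real.sq_sqrt (by positivity), ← exp_nat_mul]
      have e : ((2 : ℕ) : ℝ) * (-(2 / 25) / h) = -(4 / 25) / h := by push_cast; ring
      rw [e]
      calc _ ≤ B * (2 * R) + B * (2 * R) := add_le_add hI1 hI2
        _ = _ := by rw [hB]; ring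
    refine hfin.trans ?_
    gcongr
    linarith
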